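/- arXiv:1909.00313 — 2 statements merged into one kernel-verified Lean document; each statement's English description precedes it below -/
import Mathlib

section
/- The map λ ↦ wt(λ) is a bijection from the set of strict partitions all of whose parts are at most n onto the Weyl group orbit W·Λ₁. -/
/-- The fundamental weight Λ₁ = (1/2, …, 1/2) of type Bₙ in ℚⁿ. -/
def LambdaOne (n : ℕ) : Fin n → ℚ := fun _ => 1 / 2

/-- The k-th simple root of type Bₙ (1-based index r): α₁ = e₁ and
αᵣ = eᵣ - e_{r-1} for r ≥ 2; expressed with 0-based coordinates. -/
def simpleRootB (n : ℕ) (r : ℕ) : Fin n → ℚ := fun i =>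
  (if (i : ℕ) + 1 = r then 1 else 0) - (if (i : ℕ) + 2 = r then 1 else 0)

/-- Negation of the coordinate `c`. -/
def negCoord {n : ℕ} (c : Fin n) : Equiv.Perm (Fin n → ℚ) :=
  Equiv.piCongrRight fun i => if i = c then Equiv.neg ℚ else Equiv.refl ℚ

/-- The simple reflection `s_k` of type Bₙ: `s₁` negates the first coordinate and,
for `k ≥ 2`, `s_k` exchanges the coordinates `k-1` and `k`. -/
def simpleReflB {n : ℕ} (c : Fin n) : Equiv.Perm (Fin n → ℚ) :=
  if (c : ℕ) = 0 then negCoord c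
  else (Equiv.swap c ⟨(c : ℕ) - 1, Nat.lt_of_le_of_lt (Nat.sub_le _ _) c.isLt⟩).arrowCongr (Equiv.refl ℚ)

/-- The Weyl group of type Bₙ, generated by the simple reflections. -/
def weylB (n : ℕ) : Subgroup (Equiv.Perm (Fin n → ℚ)) :=
  Subgroup.closure (Set.range (simpleReflB (n := n)))

/-- The shifted Young diagram of a strict partition, as a finset of (1-based)
boxes: the (1-based) row `i+1` consists of the boxes `(i+1, j)` for
`i + 1 ≤ j ≤ l[i] + i`. -/
def diagFinset (l : List ℕ) : Finset (ℕ × ℕ) :=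
  (Finset.range l.length).biUnion fun i =>
    (Finset.Icc (i + 1) (l.getD i 0 + i)).image fun j => (i + 1, j)

/-- The residue `res(i,j) = j - i + 1` of a box. -/
def resBox (b : ℕ × ℕ) : ℕ := b.2 + 1 - b.1

/-- wt(λ) = Λ₁ - Σ_{(i,j) ∈ λ} α_{res(i,j)}. -/
noncomputable def wtB (n : ℕ) (l : List ℕ) : Fin n → ℚ :=
  LambdaOne n - ∑ b ∈ diagFinset l, simpleRootB n (resBox b)

/-!
The simple roots telescope, `α₁ + ⋯ + α_m = e_m`, so a row of length `m` contributes `e_m` and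
`wt(λ) = Λ₁ - ∑ᵢ e_{λᵢ}` is the vector `(±1/2, …, ±1/2)` whose negative coordinates are the parts
of `λ`. A strict partition is determined by its set of parts, so it remains to see that the orbit
of `Λ₁` consists of all such sign vectors. The Weyl group acts by signed permutations, and it
contains every sign change of a single coordinate, since conjugating `s₁` by the transpositions
`s_k` moves the negated coordinate.
-/

open Finset

theorem sum_Icc_simpleRootB_apply {n : ℕ} (m : ℕ) (k : Fin n) :
    ∑ r ∈ Icc 1 m, simpleRootB n r k = if (k : ℕ) + 1 = m then 1 else 0 := by
  induction m with
  | zero => simp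
  | succ m ih =>
    have telescope : simpleRootB n (m + 1) k =
        (if (k : ℕ) + 1 = m + 1 then 1 else 0) - if (k : ℕ) + 1 = m then 1 else 0 := by
      simp [simpleRootB]
    rw [sum_Icc_succ_top (by lia), ih, telescope, add_sub_cancel]

theorem sum_diagFinset_resBox {M : Type*} [AddCommMonoid M] (f : ℕ → M) (l : List ℕ) :
    ∑ b ∈ diagFinset l, f (resBox b) = (l.map fun m => ∑ r ∈ Icc 1 m, f r).sum := by
  have row_disjoint : Set.PairwiseDisjoint (range l.length : Set ℕ)
      fun i => (Icc (i + 1) (l.getD i 0 + i)).image fun j => (i + 1, j) := by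
    intro i _ i' _ hne
    simp only [Function.onFun, disjoint_left, mem_image]
    rintro _ ⟨j, -, rfl⟩ ⟨j', -, h⟩
    exact hne (Nat.succ.inj (congrArg Prod.fst h)).symm
  have row_sum (i m : ℕ) :
      ∑ b ∈ (Icc (i + 1) (m + i)).image (fun j => (i + 1, j)), f (resBox b) =
        ∑ r ∈ Icc 1 m, f r := by
    rw [add_comm i 1, ← image_add_right_Icc, image_image, sum_image (by simp)]
    refine sum_congr rfl fun r _ => congrArg f ?_
    simp only [resBox, Function.comp_apply]
    lia
  rw [diagFinset, sum_biUnion row_disjoint, ← Fin.sum_univ_fun_getElem, sum_range]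
  simp only [row_sum, List.getD_eq_getElem, Fin.is_lt]

theorem wtB_apply {n : ℕ} (l : List ℕ) (k : Fin n) :
    wtB n l k = 1 / 2 - (l.count ((k : ℕ) + 1) : ℚ) := by
  have sum_indicator :
      (l.map fun m => if (k : ℕ) + 1 = m then (1 : ℚ) else 0).sum = l.count ((k : ℕ) + 1) := by
    induction l with
    | nil => simp
    | cons m l ih => simp [ih, List.count_cons, add_comm, @eq_comm _ m]
  rw [wtB, Pi.sub_apply, Finset.sum_apply, sum_diagFinset_resBox fun r => simpleRootB n r k]
  simp only [sum_Icc_simpleRootB_apply, sum_indicator, LambdaOne]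

theorem wtB_apply_of_nodup {n : ℕ} {l : List ℕ} (hl : l.Nodup) (k : Fin n) :
    wtB n l k = if (k : ℕ) + 1 ∈ l then -(1 / 2) else 1 / 2 := by
  rw [wtB_apply, hl.count]
  split_ifs <;> norm_num

section WeylGroup

variable {n : ℕ}

theorem negCoord_apply (c : Fin n) (v : Fin n → ℚ) :
    negCoord c v = Function.update v c (-v c) := by
  ext i
  by_cases h : i = c
  · subst h; simp [negCoord]
  · simp [negCoord, h]

theorem arrowCongr_mul_negCoord_mul_inv (σ : Equiv.Perm (Fin n)) (c : Fin n) :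
    (σ.arrowCongr (Equiv.refl ℚ) * negCoord c * (σ.arrowCongr (Equiv.refl ℚ))⁻¹ :
      Equiv.Perm (Fin n → ℚ)) = negCoord (σ c) := by
  rw [mul_inv_eq_iff_eq_mul]
  ext1 v
  have arrowCongr_apply (u : Fin n → ℚ) : σ.arrowCongr (Equiv.refl ℚ) u = u ∘ σ.symm := rfl
  simp only [Equiv.Perm.mul_apply, negCoord_apply, arrowCongr_apply, Function.update_comp_equiv,
    Equiv.symm_symm, Function.comp_apply, Equiv.symm_apply_apply]

theorem negCoord_mem_weylB (c : Fin n) : negCoord c ∈ weylB n := by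
  have refl_mem (c : Fin n) : simpleReflB c ∈ weylB n :=
    Subgroup.subset_closure (Set.mem_range_self c)
  obtain ⟨m, hm⟩ := c
  induction m with
  | zero => exact refl_mem ⟨0, hm⟩
  | succ m ih =>
    let σ : Equiv.Perm (Fin n) := Equiv.swap ⟨m + 1, hm⟩ ⟨m, by lia⟩
    have hσ : σ.arrowCongr (Equiv.refl ℚ) ∈ weylB n := refl_mem ⟨m + 1, hm⟩
    have hconj := mul_mem (mul_mem hσ (ih (by lia))) (inv_mem hσ)
    rwa [arrowCongr_mul_negCoord_mul_inv, Equiv.swap_apply_right] at hconj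

theorem exists_mem_weylB_apply_eq_piecewise_neg (s : Finset (Fin n)) (v : Fin n → ℚ) :
    ∃ w ∈ weylB n, w v = s.piecewise (-v) v := by
  induction s using Finset.induction_on with
  | empty => exact ⟨1, one_mem _, by simp⟩
  | insert c s hc ih =>
    obtain ⟨w, hw, hwv⟩ := ih
    refine ⟨negCoord c * w, mul_mem (negCoord_mem_weylB c) hw, ?_⟩
    rw [Equiv.Perm.mul_apply, hwv, negCoord_apply, piecewise_insert,
      piecewise_eq_of_notMem _ _ _ hc, Pi.neg_apply]

theorem exists_mem_weylB_apply_eq_of_abs_eq {u v : Fin n → ℚ} (h : ∀ i, |u i| = |v i|) :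
    ∃ w ∈ weylB n, w u = v := by
  obtain ⟨w, hw, hwu⟩ := exists_mem_weylB_apply_eq_piecewise_neg {i | v i ≠ u i} u
  refine ⟨w, hw, hwu.trans (funext fun i => ?_)⟩
  by_cases hi : v i = u i
  · simp [hi]
  · simpa [hi] using ((abs_eq_abs.mp (h i).symm).resolve_left hi).symm

theorem exists_perm_abs_simpleReflB_apply (c : Fin n) :
    ∃ σ : Equiv.Perm (Fin n), ∀ v i, |simpleReflB c v i| = |v (σ i)| := by
  by_cases hc : (c : ℕ) = 0
  · refine ⟨1, fun v i => ?_⟩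
    by_cases hi : i = c
    · subst hi; simp [simpleReflB, hc, negCoord_apply]
    · simp [simpleReflB, hc, negCoord_apply, hi]
  · exact ⟨_, fun v i => by simp only [simpleReflB, if_neg hc]; rfl⟩

theorem exists_perm_abs_apply_of_mem_weylB {w : Equiv.Perm (Fin n → ℚ)} (hw : w ∈ weylB n) :
    ∃ σ : Equiv.Perm (Fin n), ∀ v i, |w v i| = |v (σ i)| := by
  induction hw using Subgroup.closure_induction with
  | mem _ hx =>
    obtain ⟨c, rfl⟩ := hx
    exact exists_perm_abs_simpleReflB_apply c
  | one => exact ⟨1, fun _ _ => rfl⟩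
  | mul x y _ _ hx hy =>
    obtain ⟨σ, hσ⟩ := hx
    obtain ⟨τ, hτ⟩ := hy
    exact ⟨τ * σ, fun v i => (hσ (y v) i).trans (hτ v (σ i))⟩
  | inv x _ hx =>
    obtain ⟨σ, hσ⟩ := hx
    exact ⟨σ⁻¹, fun v i => by simpa using (hσ (x⁻¹ v) (σ⁻¹ i)).symm⟩

end WeylGroup

/-- The vectors `(±1/2, …, ±1/2)`, i.e. the weights of the spin representation of type `Bₙ`. -/
def spinWeights (n : ℕ) : Set (Fin n → ℚ) := {v | ∀ i, |v i| = 1 / 2}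

theorem weylB_orbit_LambdaOne (n : ℕ) :
    {v | ∃ w ∈ weylB n, w (LambdaOne n) = v} = spinWeights n := by
  have abs_LambdaOne (i : Fin n) : |LambdaOne n i| = 1 / 2 := abs_of_pos one_half_pos
  ext v
  constructor
  · rintro ⟨w, hw, rfl⟩ i
    obtain ⟨σ, hσ⟩ := exists_perm_abs_apply_of_mem_weylB hw
    rw [hσ, abs_LambdaOne]
  · exact fun hv => exists_mem_weylB_apply_eq_of_abs_eq fun i => (abs_LambdaOne i).trans (hv i).symm

/-- The strict partitions with all parts at most `n`, as decreasing lists of their parts. -/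
def strictPartitions (n : ℕ) : Set (List ℕ) :=
  {l | l.IsChain (· > ·) ∧ ∀ x ∈ l, 0 < x ∧ x ≤ n}

theorem mapsTo_wtB (n : ℕ) : Set.MapsTo (wtB n) (strictPartitions n) (spinWeights n) := by
  intro l hl i
  rw [wtB_apply_of_nodup hl.1.sortedGT.nodup]
  split_ifs <;> norm_num [abs_of_pos]

theorem injOn_wtB (n : ℕ) : Set.InjOn (wtB n) (strictPartitions n) := by
  intro l hl l' hl' h
  have mem_iff_of_coord (k : Fin n) : (k : ℕ) + 1 ∈ l ↔ (k : ℕ) + 1 ∈ l' := by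
    have hk := congrFun h k
    rw [wtB_apply, wtB_apply, sub_right_inj, Nat.cast_inj] at hk
    rw [← List.count_pos_iff, hk, List.count_pos_iff]
  refine hl.1.sortedGT.eq_of_mem_iff hl'.1.sortedGT fun x => ?_
  by_cases hx : 0 < x ∧ x ≤ n
  · simpa only [Nat.sub_add_cancel hx.1] using mem_iff_of_coord ⟨x - 1, by lia⟩
  · exact iff_of_false (fun hxl => hx (hl.2 x hxl)) (fun hxl' => hx (hl'.2 x hxl'))

theorem surjOn_wtB (n : ℕ) : Set.SurjOn (wtB n) (strictPartitions n) (spinWeights n) := by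
  intro v hv
  let parts : Finset ℕ := ({i | v i = -(1 / 2)} : Finset (Fin n)).image fun i : Fin n => (i : ℕ) + 1
  have mem_parts (k : Fin n) : (k : ℕ) + 1 ∈ parts.sort (· ≥ ·) ↔ v k = -(1 / 2) := by
    simp [parts, Fin.val_inj]
  have sorted : (parts.sort (· ≥ ·)).SortedGT := parts.sortedGT_sort
  refine ⟨parts.sort (· ≥ ·), ⟨sorted.isChain, fun x hx => ?_⟩, funext fun k => ?_⟩
  · obtain ⟨i, -, rfl⟩ := mem_image.mp ((mem_sort _).mp hx)
    exact ⟨Nat.succ_pos _, i.isLt⟩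
  · rw [wtB_apply_of_nodup sorted.nodup]
    simp only [mem_parts]
    split_ifs with hk
    · exact hk.symm
    · exact (((abs_eq one_half_pos.le).mp (hv k)).resolve_right hk).symm

theorem wtB_bijective_onto_orbit (n : ℕ) :
    Set.BijOn (wtB n)
      {l : List ℕ | l.Chain' (· > ·) ∧ ∀ x ∈ l, 0 < x ∧ x ≤ n}
      {v | ∃ w ∈ weylB n, w (LambdaOne n) = v} := by
  rw [weylB_orbit_LambdaOne]
  exact ⟨mapsTo_wtB n, injOn_wtB n, surjOn_wtB n⟩
end

section
/- The prescribed operators make Sp(b) a module over the quiver Hecke algebra R(β) of type B_n; the cyclotomic ideal ⟨x_N^{⟨h_{ν_N}, Λ₁⟩} e(ν) : ν ∈ I^β⟩ acts by zero, so Sp(b) is a module over the cyclotomic quiver Hecke algebra R^{Λ₁}(ξ); and Sp(b) is a simple R^{Λ₁}(ξ)-module on which every x_k acts by zero (a homogeneous simple module, concentrated in a single degree of the ℤ-grading). -/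
/-!
Standard tableaux of a shifted shape are the linear extensions of its poset of boxes. Consecutive
entries of a tableau either lie in adjacent boxes, whose residues differ by one, or in incomparable
boxes, whose residues differ by at least two. Hence `τ_j T ≠ 0` exactly when the simple roots at
positions `j` and `j + 1` are orthogonal. Since every `x_k` acts by zero, the relations only involve
constant terms: `Q_{i,j}` has constant term `1` if `α_i ⊥ α_j` and `0` otherwise, which is the
quadratic relation. Exchanging the same entries in another order never leaves the set of linear
extensions if the first order does not, which gives the commutation and braid relations up to
the correction term in the latter, whose constant term is `t_{i,j;1,0}`. That vanishes unless
`a_{i,j} = -1`, whereas a residue pattern `i, j, i` in consecutive positions arises only on two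
diagonal boxes and the box joining them, where `α_i` is the short root and `a_{i,j} = -2`.

The module is simple because boxes of equal residue are comparable, so a tableau is determined by
its residue sequence and the `e(ν)` separate tableaux, while bubble sort connects any two tableaux
by exchanges of consecutive entries.
-/

open scoped Classical

namespace QHA

variable (k : Type) [Field k]

/-- Generators of the quiver Hecke algebra `R(β)` on `m` strands with vertex set
`Fin n`: the idempotents `e(ν)`, the polynomial generators `x_p` and the
intertwiners `τ_j` (acting on strands `j`, `j+1`, 0-based). -/
inductive Gen (n m : ℕ) : Type
  | e (ν : Fin m → Fin n) : Gen n m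
  | x (p : Fin m) : Gen n m
  | t (j : ℕ) (h : j + 1 < m) : Gen n m

/-- The free algebra on the generators. -/
abbrev FA (n m : ℕ) := FreeAlgebra k (Gen n m)

variable {n m : ℕ}

noncomputable def Eg (ν : Fin m → Fin n) : FA k n m := FreeAlgebra.ι k (Gen.e ν)
noncomputable def Xg (p : Fin m) : FA k n m := FreeAlgebra.ι k (Gen.x p)
noncomputable def Tg (j : ℕ) (h : j + 1 < m) : FA k n m := FreeAlgebra.ι k (Gen.t j h)

/-- The transposition of the strands `j`, `j+1` (0-based). -/
def posSwap (j : ℕ) (h : j + 1 < m) : Equiv.Perm (Fin m) :=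
  Equiv.swap ⟨j, Nat.lt_of_succ_lt h⟩ ⟨j + 1, h⟩

/-- The place-permutation `s_j ν` of a sequence `ν`. -/
def swapSeq (j : ℕ) (h : j + 1 < m) (ν : Fin m → Fin n) : Fin m → Fin n :=
  ν ∘ posSwap j h

/-- Evaluation of a two-variable polynomial `p(u,v)` at two elements of a
(possibly noncommutative) `k`-algebra, as `Σ t_{p,q} a^p b^q`. -/
noncomputable def eval2 {A : Type} [Ring A] [Algebra k A]
    (p : MvPolynomial (Fin 2) k) (a b : A) : A :=
  ∑ d ∈ p.support, algebraMap k A (MvPolynomial.coeff d p) * (a ^ d 0 * b ^ d 1)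

/-- Evaluation of a three-variable polynomial. -/
noncomputable def eval3 {A : Type} [Ring A] [Algebra k A]
    (p : MvPolynomial (Fin 3) k) (a b c : A) : A :=
  ∑ d ∈ p.support, algebraMap k A (MvPolynomial.coeff d p) * (a ^ d 0 * b ^ d 1 * c ^ d 2)

/-- For `p = Q(u,v)`, the polynomial `(Q(u,v) - Q(w,v))/(u - w)` in the three
variables `u = X 0`, `v = X 1`, `w = X 2` (exact division by the monic `u - w`). -/
noncomputable def Qbar (p : MvPolynomial (Fin 2) k) : MvPolynomial (Fin 3) k :=
  (MvPolynomial.finSuccEquiv k 2).symm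
    (Polynomial.divByMonic
      ((MvPolynomial.finSuccEquiv k 2)
        (MvPolynomial.rename (fun i : Fin 2 => if i = 0 then (0 : Fin 3) else 1) p -
          MvPolynomial.rename (fun i : Fin 2 => if i = 0 then (2 : Fin 3) else 1) p))
      (Polynomial.X - Polynomial.C (MvPolynomial.X 1)))

/-- Admissibility of the family `Q_{i,j}(u,v)` of polynomials with respect to the
(symmetrizable) Cartan matrix `A` and symmetrizing integers `d`
(so `(α_i, α_j) = d_i A_{i j}`):
`Q_{i,i} = 0`; `Q_{j,i}(u,v) = Q_{i,j}(v,u)`; `Q_{i,j} = 1` whenever `(α_i,α_j) = 0`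
(`i ≠ j`); `Q_{i,j}` is supported on `(p,q)` with
`(α_i,α_i) p + (α_j,α_j) q = -2(α_i,α_j)`; and `t_{i,j;-a_{ij},0} ≠ 0`. -/
def QAdmissible (A : Fin n → Fin n → ℤ) (d : Fin n → ℤ)
    (Q : Fin n → Fin n → MvPolynomial (Fin 2) k) : Prop :=
  (∀ i, Q i i = 0) ∧
  (∀ i j, Q j i = MvPolynomial.rename (Equiv.swap (0 : Fin 2) 1) (Q i j)) ∧
  (∀ i j, i ≠ j → d i * A i j = 0 → Q i j = 1) ∧
  (∀ i j, i ≠ j → ∀ dd ∈ (Q i j).support,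
    (2 * d i) * (dd 0 : ℤ) + (2 * d j) * (dd 1 : ℤ) = -2 * (d i * A i j)) ∧
  (∀ i j, i ≠ j →
    MvPolynomial.coeff (Finsupp.single (0 : Fin 2) (-(A i j)).toNat) (Q i j) ≠ 0)

/-- The defining relations of the quiver Hecke algebra `R(β)`, where
`S ⊆ I^m` is the set of admissible sequences (`I^β`; `e(ν) = 0` for `ν ∉ S`). -/
inductive Rel (Q : Fin n → Fin n → MvPolynomial (Fin 2) k) (S : Set (Fin m → Fin n)) :
    FA k n m → FA k n m → Prop
  | e_orth (ν ν' : Fin m → Fin n) (hne : ν ≠ ν') : Rel Q S (Eg k ν * Eg k ν') 0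
  | e_idem (ν : Fin m → Fin n) : Rel Q S (Eg k ν * Eg k ν) (Eg k ν)
  | e_sum : Rel Q S (∑ ν : Fin m → Fin n, Eg k ν) 1
  | e_out (ν : Fin m → Fin n) (hν : ν ∉ S) : Rel Q S (Eg k ν) 0
  | xx (p q : Fin m) : Rel Q S (Xg k p * Xg k q) (Xg k q * Xg k p)
  | xe (p : Fin m) (ν : Fin m → Fin n) : Rel Q S (Xg k p * Eg k ν) (Eg k ν * Xg k p)
  | te (j : ℕ) (h : j + 1 < m) (ν : Fin m → Fin n) :
      Rel Q S (Tg k j h * Eg k ν) (Eg k (swapSeq j h ν) * Tg k j h)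
  | tt (a : ℕ) (ha : a + 1 < m) (b : ℕ) (hb : b + 1 < m) (hab : a + 1 < b ∨ b + 1 < a) :
      Rel Q S (Tg k a ha * Tg k b hb) (Tg k b hb * Tg k a ha)
  | tsq (j : ℕ) (h : j + 1 < m) (ν : Fin m → Fin n) :
      Rel Q S (Tg k j h * Tg k j h * Eg k ν)
        (eval2 k (Q (ν ⟨j, Nat.lt_of_succ_lt h⟩) (ν ⟨j + 1, h⟩))
          (Xg k ⟨j, Nat.lt_of_succ_lt h⟩) (Xg k ⟨j + 1, h⟩) * Eg k ν)
  | tx_left (j : ℕ) (h : j + 1 < m) (ν : Fin m → Fin n)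
      (hv : ν ⟨j, Nat.lt_of_succ_lt h⟩ = ν ⟨j + 1, h⟩) :
      Rel Q S (Tg k j h * Xg k ⟨j, Nat.lt_of_succ_lt h⟩ * Eg k ν)
        (Xg k ⟨j + 1, h⟩ * Tg k j h * Eg k ν - Eg k ν)
  | tx_right (j : ℕ) (h : j + 1 < m) (ν : Fin m → Fin n)
      (hv : ν ⟨j, Nat.lt_of_succ_lt h⟩ = ν ⟨j + 1, h⟩) :
      Rel Q S (Tg k j h * Xg k ⟨j + 1, h⟩ * Eg k ν)
        (Xg k ⟨j, Nat.lt_of_succ_lt h⟩ * Tg k j h * Eg k ν + Eg k ν)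
  | tx_comm (j : ℕ) (h : j + 1 < m) (ν : Fin m → Fin n) (p : Fin m)
      (hcase : ν ⟨j, Nat.lt_of_succ_lt h⟩ ≠ ν ⟨j + 1, h⟩ ∨ ((p : ℕ) ≠ j ∧ (p : ℕ) ≠ j + 1)) :
      Rel Q S (Tg k j h * Xg k p * Eg k ν) (Xg k (posSwap j h p) * Tg k j h * Eg k ν)
  | braid_ne (j : ℕ) (h1 : j + 1 < m) (h2 : j + 2 < m) (ν : Fin m → Fin n)
      (hv : ν ⟨j, by omega⟩ ≠ ν ⟨j + 2, h2⟩) :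
      Rel Q S
        (Tg k (j + 1) (by omega) * Tg k j h1 * Tg k (j + 1) (by omega) * Eg k ν)
        (Tg k j h1 * Tg k (j + 1) (by omega) * Tg k j h1 * Eg k ν)
  | braid_eq (j : ℕ) (h1 : j + 1 < m) (h2 : j + 2 < m) (ν : Fin m → Fin n)
      (hv : ν ⟨j, by omega⟩ = ν ⟨j + 2, h2⟩) :
      Rel Q S
        (Tg k (j + 1) (by omega) * Tg k j h1 * Tg k (j + 1) (by omega) * Eg k ν)
        (Tg k j h1 * Tg k (j + 1) (by omega) * Tg k j h1 * Eg k ν +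
          eval3 k (Qbar k (Q (ν ⟨j, by omega⟩) (ν ⟨j + 1, h1⟩)))
            (Xg k ⟨j, by omega⟩) (Xg k ⟨j + 1, h1⟩) (Xg k ⟨j + 2, h2⟩) * Eg k ν)

/-- The extra cyclotomic relations `x_m^{⟨h_{ν_m}, Λ⟩} e(ν) = 0` (`ν ∈ I^β`),
where `Λ` is written in fundamental-weight coordinates, so `⟨h_i, Λ⟩ = Λ i`. -/
inductive CycRel (Λ : Fin n → ℤ) (S : Set (Fin m → Fin n)) :
    FA k n m → FA k n m → Prop
  | cyc (ν : Fin m → Fin n) (hν : ν ∈ S) (p : Fin m) (hp : (p : ℕ) + 1 = m) :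
      CycRel Λ S (Xg k p ^ (Λ (ν p)).toNat * Eg k ν) 0

/-- Relations of the cyclotomic quiver Hecke algebra `R^Λ(β)`. -/
def CRel (Q : Fin n → Fin n → MvPolynomial (Fin 2) k) (S : Set (Fin m → Fin n))
    (Λ : Fin n → ℤ) : FA k n m → FA k n m → Prop :=
  fun a b => Rel k Q S a b ∨ CycRel k Λ S a b

/-- The `j`-th column of the Cartan matrix: the simple root `α_j` written in
fundamental-weight coordinates (`⟨h_i, α_j⟩ = A i j`). -/
def αcol (A : Fin n → Fin n → ℤ) (j : Fin n) : Fin n → ℤ := fun i => A i j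

/-- `FPath A Λ [i₁, …, i_ℓ] ξ` means `f̃_{i₁} ⋯ f̃_{i_ℓ} Λ = ξ` in the
minuscule crystal realized on the Weyl orbit of `Λ`:
`f̃_j μ = μ - α_j` whenever `⟨h_j, μ⟩ = 1` (and is undefined otherwise). -/
inductive FPath (A : Fin n → Fin n → ℤ) (Λ : Fin n → ℤ) :
    List (Fin n) → (Fin n → ℤ) → Prop
  | nil : FPath A Λ [] Λ
  | cons (j : Fin n) (l : List (Fin n)) (ξ : Fin n → ℤ) :
      FPath A Λ l ξ → ξ j = 1 → FPath A Λ (j :: l) (ξ - αcol A j)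

/-- The simple reflection `s_j μ = μ - ⟨h_j, μ⟩ α_j` on the weight lattice. -/
def sRef (A : Fin n → Fin n → ℤ) (j : Fin n) (μ : Fin n → ℤ) : Fin n → ℤ :=
  fun i => μ i - μ j * A i j

/-- The Weyl group orbit of `Λ` (the Weyl group being generated by the
involutions `s_j`, its orbit consists of images under words in the `s_j`). -/
def orbitW (A : Fin n → Fin n → ℤ) (Λ : Fin n → ℤ) : Set (Fin n → ℤ) :=
  {ξ | ∃ l : List (Fin n), l.foldr (sRef A) Λ = ξ}

end QHA

namespace QHA

variable (k : Type) [Field k]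

/-- The Cartan matrix of type `Bₙ` (0-based labeling; the first node carries the
short simple root: `a_{1,2} = -2`, `a_{2,1} = -1` in 1-based labels, and
`1 — 2 — ⋯ — n` is a chain). -/
def AB (n : ℕ) : Fin n → Fin n → ℤ := fun i j =>
  if i = j then 2
  else if (i : ℕ) = 0 ∧ (j : ℕ) = 1 then -2
  else if (i : ℕ) + 1 = (j : ℕ) ∨ (j : ℕ) + 1 = (i : ℕ) then -1
  else 0

/-- The symmetrizing integers of type `Bₙ`: `d₁ = 1` and `d_i = 2` for `i ≥ 2`. -/
def dB (n : ℕ) : Fin n → ℤ := fun i => if (i : ℕ) = 0 then 1 else 2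

/-- The shifted Young diagram of a strict partition `l = (λ₁ > λ₂ > ⋯)`,
as the set of (1-based) boxes `(i,j)` with `1 ≤ i ≤ ℓ`, `i ≤ j ≤ λᵢ + i - 1`. -/
def diagram (l : List ℕ) : Set (ℕ × ℕ) :=
  {b | b.1 - 1 < l.length ∧ 1 ≤ b.1 ∧ b.1 ≤ b.2 ∧ b.2 + 1 ≤ l.getD (b.1 - 1) 0 + b.1}

/-- The shifted Young diagram as a finset. -/
def diagFinset (l : List ℕ) : Finset (ℕ × ℕ) :=
  (Finset.range l.length).biUnion fun i =>
    (Finset.Icc (i + 1) (l.getD i 0 + i)).image fun j => (i + 1, j)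

/-- The residue `res(i,j) = j - i + 1` of a box. -/
def resBox (b : ℕ × ℕ) : ℕ := b.2 + 1 - b.1

/-- The residue of a box as an element of `I = Fin n` (`0`-based:
the box `(i,j)` has `0`-based residue `j - i`). -/
def resFin (n : ℕ) (hn : 0 < n) (b : ℕ × ℕ) : Fin n :=
  ⟨min (b.2 - b.1) (n - 1), by omega⟩

/-- `f : Fin N → ℕ × ℕ` is a standard tableau of shifted shape `l`, where `f k` is
the box containing the entry `k+1`. -/
def IsSYT (l : List ℕ) (N : ℕ) (f : Fin N → ℕ × ℕ) : Prop :=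
  Function.Injective f ∧ Set.range f = diagram l ∧
    (∀ a b : Fin N, (f a).1 = (f b).1 → (f a).2 < (f b).2 → a < b) ∧
    (∀ a b : Fin N, (f a).2 = (f b).2 → (f a).1 < (f b).1 → a < b)

/-- The residue sequence `res(T) = (res(b_N), …, res(b₁)) ∈ I^N` of a tableau. -/
def resSeq (n : ℕ) (hn : 0 < n) {N : ℕ} (f : Fin N → ℕ × ℕ) : Fin N → Fin n :=
  fun p => resFin n hn (f p.rev)

/-- The weight `wt(λ) = Λ₁ - Σ_{b ∈ λ} α_{res(b)}`, in fundamental-weight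
coordinates, of type `Bₙ`. -/
noncomputable def wtP (n : ℕ) (hn : 0 < n) (l : List ℕ) : Fin n → ℤ :=
  Pi.single ⟨0, hn⟩ 1 - ∑ b ∈ diagFinset l, αcol (AB n) (resFin n hn b)

/-- Exchanging in `T` the entries occupying positions `j`, `j+1` of the residue
sequence, i.e. the entries `N-j` and `N-j-1`. -/
def swapEnt {N : ℕ} (j : ℕ) (h : j + 1 < N) (f : Fin N → ℕ × ℕ) : Fin N → ℕ × ℕ :=
  f ∘ Equiv.swap (Fin.rev ⟨j, Nat.lt_of_succ_lt h⟩) (Fin.rev ⟨j + 1, h⟩)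

section Ops

variable {N : ℕ} (n : ℕ) (hn : 0 < n) (P : (Fin N → ℕ × ℕ) → Prop)

/-- The vector space with basis the tableaux satisfying `P`. -/
abbrev TabV : Type := {f : Fin N → ℕ × ℕ // P f} → k

/-- The prescribed action of `e(μ)`: projection onto the span of the tableaux
with residue sequence `μ`. -/
noncomputable def eOpTab (μ : Fin N → Fin n) : Module.End k (TabV k P) :=
  LinearMap.pi fun T => if resSeq n hn T.val = μ then LinearMap.proj T else 0

/-- The prescribed action of `τ_j`: `T ↦ s_j T` if `s_j T` still satisfies `P`,
and `0` otherwise. -/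
noncomputable def tOpTab (j : ℕ) (h : j + 1 < N) : Module.End k (TabV k P) :=
  LinearMap.pi fun T =>
    if hh : P (swapEnt j h T.val) then
      LinearMap.proj (⟨swapEnt j h T.val, hh⟩ : {f : Fin N → ℕ × ℕ // P f}) else 0

end Ops

section
variable {n : ℕ} (A : Fin n → Fin n → ℤ) (Λ ξ : Fin n → ℤ) (ℓ : ℕ)

/-- `I^β` for `β = Λ - ξ`. -/
def Iβ : Set (Fin ℓ → Fin n) :=
  {ν | ∑ p : Fin ℓ, αcol A (ν p) = fun i => Λ i - ξ i}
end

end QHA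

namespace QHA

/-- `f` enumerates the elements of `D` compatibly with the order of `α`; for the cells of a shifted
diagram, ordered componentwise, these are the standard tableaux. -/
structure IsLinearExtension {ι α : Type*} [LE ι] [LE α] (D : Set α) (f : ι → α) : Prop where
  injective : Function.Injective f
  range_eq : Set.range f = D
  le_of_apply_le : ∀ ⦃a b⦄, f a ≤ f b → a ≤ b

namespace IsLinearExtension

section LE

variable {ι α : Type*} [LE ι] [LE α] {D : Set α} {f : ι → α}

lemma mem (hf : IsLinearExtension D f) (a : ι) : f a ∈ D :=
  hf.range_eq.subset (Set.mem_range_self a)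

lemma exists_apply_eq (hf : IsLinearExtension D f) {x : α} (hx : x ∈ D) : ∃ a, f a = x := by
  rwa [← hf.range_eq] at hx

instance finite_subtype [Finite ι] (D : Set α) :
    Finite {f : ι → α // IsLinearExtension D f} := by
  rcases isEmpty_or_nonempty {f : ι → α // IsLinearExtension D f} with _ | ⟨f, hf⟩
  · infer_instance
  have : Finite D := by
    rw [← hf.range_eq]
    infer_instance
  exact Finite.of_injective (fun g a ↦ (⟨g.1 a, g.2.mem a⟩ : D))
    fun g g' h ↦ Subtype.ext <| funext fun a ↦ congrArg Subtype.val (congrFun h a)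

end LE

section LinearOrder

variable {ι α : Type*} [LinearOrder ι] [PartialOrder α] {D : Set α} {f g : ι → α}

lemma eq_of_apply_lt_of_le (hf : IsLinearExtension D f) {a b : ι} (hab : a ⋖ b) {x : α}
    (hx : x ∈ D) (hax : f a < x) (hxb : x ≤ f b) : x = f b := by
  obtain ⟨c, rfl⟩ := hf.exists_apply_eq hx
  exact congrArg f ((hab.eq_or_eq (hf.le_of_apply_le hax.le) (hf.le_of_apply_le hxb)).resolve_left
    (by rintro rfl; exact hax.ne rfl))

lemma lt_of_apply_lt (hf : IsLinearExtension D f) {a b : ι} (h : f a < f b) : a < b :=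
  (hf.le_of_apply_le h.le).lt_of_ne fun e ↦ h.ne (congrArg f e)

lemma comp_swap_iff (hf : IsLinearExtension D f) {a b : ι} (hab : a ⋖ b) :
    IsLinearExtension D (f ∘ Equiv.swap a b) ↔ ¬ f a ≤ f b := by
  refine ⟨fun h hle ↦ hab.lt.not_ge (h.le_of_apply_le (by simpa using hle)), fun h ↦
    ⟨hf.injective.comp (Equiv.injective _), by simp [Set.range_comp, hf.range_eq],
      fun c d hcd ↦ ?_⟩⟩
  have hswap := hf.le_of_apply_le hcd
  by_contra! hdc
  obtain ⟨rfl, rfl⟩ : d = a ∧ c = b := by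
    have := hab.lt
    have := hab.2
    simp only [Equiv.swap_apply_def] at hswap
    grind
  exact h (by simpa using hcd)

lemma comp_swap_of_comp_swap_comp_swap (hf : IsLinearExtension D f) {a b c d : ι} (hab : a ⋖ b)
    (hcd : c ⋖ d) (hne : a ≠ c)
    (h : IsLinearExtension D (f ∘ Equiv.swap a b ∘ Equiv.swap c d)) :
    IsLinearExtension D (f ∘ Equiv.swap a b) := by
  refine (hf.comp_swap_iff hab).mpr fun hle ↦ ?_
  have hswap : Equiv.swap c d b ≤ Equiv.swap c d a := h.le_of_apply_le (by simpa using hle)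
  have := hab.lt
  have := hcd.lt
  have := hcd.2
  simp only [Equiv.swap_apply_def] at hswap
  grind

lemma comp_swap_comp_swap_of_comp_swap (hf : IsLinearExtension D f) {a b c : ι} (hab : a ⋖ b)
    (hbc : b ⋖ c) (h : IsLinearExtension D (f ∘ Equiv.swap a c)) :
    IsLinearExtension D (f ∘ Equiv.swap a b ∘ Equiv.swap b c) ∧
      IsLinearExtension D (f ∘ Equiv.swap b c ∘ Equiv.swap a b) := by
  have hac := hab.lt.trans hbc.lt
  have hswap_b : Equiv.swap a c b = b := Equiv.swap_apply_of_ne_of_ne hab.lt.ne' hbc.lt.ne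
  have incomp_ab : ¬ f a ≤ f b := fun hle ↦
    hbc.lt.not_ge (h.le_of_apply_le (by simpa [hswap_b] using hle))
  have incomp_bc : ¬ f b ≤ f c := fun hle ↦
    hab.lt.not_ge (h.le_of_apply_le (by simpa [hswap_b] using hle))
  have incomp_ac : ¬ f a ≤ f c := fun hle ↦ hac.not_ge (h.le_of_apply_le (by simpa using hle))
  refine ⟨(((hf.comp_swap_iff hab).mpr incomp_ab).comp_swap_iff hbc).mpr ?_,
    (((hf.comp_swap_iff hbc).mpr incomp_bc).comp_swap_iff hab).mpr ?_⟩
  · simpa [Equiv.swap_apply_of_ne_of_ne hac.ne' hbc.lt.ne'] using incomp_ac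
  · simpa [Equiv.swap_apply_of_ne_of_ne hab.lt.ne hac.ne] using incomp_ac

lemma eq_of_comp_eq [WellFoundedLT ι] {β : Type*} {r : α → β} (hf : IsLinearExtension D f)
    (hg : IsLinearExtension D g)
    (hr : ∀ x ∈ D, ∀ y ∈ D, r x = r y → x ≤ y ∨ y ≤ x) (h : r ∘ f = r ∘ g) : f = g := by
  funext a
  induction a using WellFoundedLT.induction with
  | ind a ih =>
    wlog hle : f a ≤ g a generalizing f g
    · exact (this hg hf h.symm (fun b hb ↦ (ih b hb).symm)
        ((hr _ (hf.mem a) _ (hg.mem a) (congrFun h a)).resolve_left hle)).symm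
    obtain ⟨c, hc⟩ := hg.exists_apply_eq (hf.mem a)
    rcases (hg.le_of_apply_le (hc.trans_le hle)).lt_or_eq with hca | rfl
    · exact absurd (hf.injective ((ih c hca).trans hc)) hca.ne
    · exact hc.symm

/-- Bubble sort of the permutation relating `f` to `g`; it terminates because each exchange makes
this permutation lexicographically smaller. -/
lemma adjacent_swap_induction [Finite ι] {S : (ι → α) → Prop} (hf : IsLinearExtension D f)
    (hg : IsLinearExtension D g) (hS : S f)
    (hswap : ∀ q a b, IsLinearExtension D q → a ⋖ b → IsLinearExtension D (q ∘ Equiv.swap a b) →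
      S q → S (q ∘ Equiv.swap a b)) : S g := by
  have : Fintype ι := Fintype.ofFinite ι
  have : LocallyFiniteOrder ι := Fintype.toLocallyFiniteOrder
  suffices key : ∀ σ : Lex (ι → ι), IsLinearExtension D (g ∘ ofLex σ) → S (g ∘ ofLex σ) → S g by
    choose σ hσ using fun a ↦ hg.exists_apply_eq (hf.mem a)
    obtain rfl : g ∘ σ = f := funext hσ
    exact key (toLex σ) hf hS
  intro σ
  induction σ using WellFoundedLT.induction with
  | ind σ ih =>
    intro hq hSq
    by_cases hmono : Monotone (ofLex σ)
    · have hinj : Function.Injective (ofLex σ) := hq.injective.of_comp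
      have hid : ofLex σ = id := (hmono.strictMono_of_injective hinj).range_inj strictMono_id |>.mp
        (by rw [(Finite.injective_iff_surjective.mp hinj).range_eq, Set.range_id])
      simpa [hid] using hSq
    · obtain ⟨a, b, hab, hlt⟩ : ∃ a b, a ⋖ b ∧ ofLex σ b < ofLex σ a := by
        simpa [monotone_iff_forall_covBy] using hmono
      have hq' : IsLinearExtension D (g ∘ ofLex σ ∘ Equiv.swap a b) :=
        (hq.comp_swap_iff hab).mpr fun hle ↦ hlt.not_ge (hg.le_of_apply_le hle)
      exact ih (toLex (ofLex σ ∘ Equiv.swap a b)) (Pi.lex_desc hab.le hlt) hq'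
        (hswap _ a b hq hab hq' hSq)

end LinearOrder

lemma exists_of_card_eq {α : Type*} [PartialOrder α] {s : Finset α} {N : ℕ} (hs : s.card = N) :
    ∃ f : Fin N → α, IsLinearExtension (s : Set α) f := by
  let t : Finset (LinearExtension α) := s
  let φ : Fin N ↪o LinearExtension α := t.orderEmbOfFin hs
  have hφ : Function.Injective φ := φ.injective
  refine ⟨φ, hφ, t.range_orderEmbOfFin hs, fun a b h ↦ ?_⟩
  have hlin := toLinearExtension.monotone h
  exact φ.le_iff_le.mp hlin

end IsLinearExtension

/-- A set of boxes (row, column) of the shifted quadrant `1 ≤ i ≤ j` that contains, together with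
a box, all boxes of the quadrant weakly north-west of it: a possibly infinite shifted diagram. -/
structure IsShiftedIdeal (D : Set (ℕ × ℕ)) : Prop where
  one_le_fst : ∀ ⦃b⦄, b ∈ D → 1 ≤ b.1
  fst_le_snd : ∀ ⦃b⦄, b ∈ D → b.1 ≤ b.2
  mem_of_le : ∀ ⦃b c⦄, b ∈ D → 1 ≤ c.1 → c.1 ≤ c.2 → c ≤ b → c ∈ D

lemma resBox_covBy {x y : ℕ × ℕ} (hx : x.1 ≤ x.2) (hy : y.1 ≤ y.2) (h : x ⋖ y) :
    resBox y = resBox x + 1 ∨ resBox x = resBox y + 1 := by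
  obtain ⟨i, j⟩ := x
  obtain ⟨i', j'⟩ := y
  simp only [Prod.mk_covBy_mk_iff, Order.covBy_iff_add_one_eq] at h
  simp only [resBox] at *
  omega

lemma resBox_add_two_le_of_incomparable {x y : ℕ × ℕ} (hx : x.1 ≤ x.2) (hy : y.1 ≤ y.2)
    (hxy : ¬ x ≤ y) (hyx : ¬ y ≤ x) :
    resBox x + 2 ≤ resBox y ∨ resBox y + 2 ≤ resBox x := by
  simp only [Prod.le_def, resBox] at *
  omega

namespace IsShiftedIdeal

variable {D : Set (ℕ × ℕ)} {N : ℕ} {f g : Fin N → ℕ × ℕ}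

lemma exists_covBy_le (hD : IsShiftedIdeal D) {x y : ℕ × ℕ} (hx : x ∈ D) (hy : y ∈ D)
    (hxy : x < y) : ∃ z ∈ D, x ⋖ z ∧ z ≤ y := by
  obtain ⟨i, j⟩ := x
  obtain ⟨i', j'⟩ := y
  have hi : 1 ≤ i := hD.one_le_fst hx
  have hij : i ≤ j := hD.fst_le_snd hx
  have hij' : i' ≤ j' := hD.fst_le_snd hy
  simp only [Prod.mk_lt_mk] at hxy
  rcases lt_or_ge j j' with hj | hj
  · have hle : (i, j + 1) ≤ (i', j') := ⟨by omega, hj⟩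
    exact ⟨(i, j + 1), hD.mem_of_le hy hi (by omega) hle, by simp [Prod.mk_covBy_mk_iff], hle⟩
  · have hle : (i + 1, j) ≤ (i', j') := ⟨by omega, by omega⟩
    exact ⟨(i + 1, j), hD.mem_of_le hy (by omega) (by omega) hle, by simp [Prod.mk_covBy_mk_iff],
      hle⟩

lemma apply_covBy_apply (hD : IsShiftedIdeal D) (hf : IsLinearExtension D f) {a b : Fin N}
    (hab : a ⋖ b) (hle : f a ≤ f b) : f a ⋖ f b := by
  have hlt : f a < f b := hle.lt_of_ne (hf.injective.ne hab.lt.ne)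
  obtain ⟨z, hz, haz, hzb⟩ := hD.exists_covBy_le (hf.mem a) (hf.mem b) hlt
  rwa [← hf.eq_of_apply_lt_of_le hab hz haz.lt hzb]

lemma resBox_apply_of_le (hD : IsShiftedIdeal D) (hf : IsLinearExtension D f) {a b : Fin N}
    (hab : a ⋖ b) (hle : f a ≤ f b) :
    resBox (f b) = resBox (f a) + 1 ∨ resBox (f a) = resBox (f b) + 1 :=
  resBox_covBy (hD.fst_le_snd (hf.mem a)) (hD.fst_le_snd (hf.mem b))
    (hD.apply_covBy_apply hf hab hle)

lemma resBox_apply_of_not_le (hD : IsShiftedIdeal D) (hf : IsLinearExtension D f) {a b : Fin N}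
    (hab : a ⋖ b) (hle : ¬ f a ≤ f b) :
    resBox (f a) + 2 ≤ resBox (f b) ∨ resBox (f b) + 2 ≤ resBox (f a) :=
  resBox_add_two_le_of_incomparable (hD.fst_le_snd (hf.mem a)) (hD.fst_le_snd (hf.mem b)) hle
    fun h ↦ hab.lt.not_ge (hf.le_of_apply_le h)

/-- Away from the diagonal the interval from `f a` to `f c` would be a full `2 × 2` square, whose
two other boxes cannot both be `f b`. -/
lemma resBox_eq_one_of_resBox_eq (hD : IsShiftedIdeal D) (hf : IsLinearExtension D f)
    {a b c : Fin N} (hab : a ⋖ b) (hbc : b ⋖ c) (hle : f a ≤ f b) (hle' : f b ≤ f c)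
    (hres : resBox (f a) = resBox (f c)) : resBox (f a) = 1 ∧ resBox (f b) = 2 := by
  have eq_fb {z : ℕ × ℕ} (hz : z ∈ D) (haz : f a < z) (hzc : z < f c) : z = f b := by
    obtain ⟨d, rfl⟩ := hf.exists_apply_eq hz
    exact congrArg f (le_antisymm (hbc.le_of_lt (hf.lt_of_apply_lt hzc))
      (hab.ge_of_gt (hf.lt_of_apply_lt haz)))
  have hcov := hD.apply_covBy_apply hf hab hle
  have hcov' := hD.apply_covBy_apply hf hbc hle'
  have hc := hf.mem c
  have hi := hD.one_le_fst (hf.mem a)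
  have hij := hD.fst_le_snd (hf.mem a)
  have hij' := hD.fst_le_snd (hf.mem b)
  generalize f a = x, f b = y, f c = z at *
  obtain ⟨i, j⟩ := x
  obtain ⟨i', j'⟩ := y
  obtain ⟨i'', j''⟩ := z
  simp only [resBox, Prod.mk_covBy_mk_iff, Order.covBy_iff_add_one_eq] at *
  obtain ⟨rfl, rfl⟩ : i'' = i + 1 ∧ j'' = j + 1 := by omega
  suffices i = j by omega
  by_contra hne
  have hright : (i, j + 1) = (i', j') :=
    eq_fb (hD.mem_of_le hc hi (by dsimp; omega) (by simp)) (by simp) (by simp)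
  have hdown : (i + 1, j) = (i', j') :=
    eq_fb (hD.mem_of_le hc (by simp) (by dsimp; omega) (by simp)) (by simp) (by simp)
  simp [hright.symm] at hdown

lemma resBox_apply_of_isMin (hD : IsShiftedIdeal D) (hf : IsLinearExtension D f) {a : Fin N}
    (ha : IsMin a) : resBox (f a) = 1 := by
  have hi := hD.one_le_fst (hf.mem a)
  have hij := hD.fst_le_snd (hf.mem a)
  have hle : ((f a).1, (f a).1) ≤ f a := ⟨le_rfl, hij⟩
  have hmem : ((f a).1, (f a).1) ∈ D := hD.mem_of_le (hf.mem a) hi le_rfl hle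
  obtain ⟨b, hb⟩ := hf.exists_apply_eq hmem
  have hba : b = a := ha.eq_of_le (hf.le_of_apply_le (hb.trans_le hle))
  rw [← hba, hb]
  simp [resBox]

lemma le_or_le_of_resBox_eq (hD : IsShiftedIdeal D) {x y : ℕ × ℕ} (hx : x ∈ D) (hy : y ∈ D)
    (h : resBox x = resBox y) : x ≤ y ∨ y ≤ x := by
  by_contra! hxy
  have := resBox_add_two_le_of_incomparable (hD.fst_le_snd hx) (hD.fst_le_snd hy) hxy.1 hxy.2
  omega

end IsShiftedIdeal

lemma getD_add_sub_le_getD {l : List ℕ} (hdec : l.IsChain (· > ·)) {i j : ℕ} (hij : i ≤ j)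
    (hj : j < l.length) : l.getD j 0 + (j - i) ≤ l.getD i 0 := by
  induction j, hij using Nat.le_induction with
  | base => simp
  | succ j hij ih =>
    have hstep := List.isChain_iff_getElem.mp hdec j hj
    have := ih (by omega)
    rw [List.getD_eq_getElem _ _ (by omega)] at this ⊢
    omega

lemma isShiftedIdeal_diagram {l : List ℕ} (hdec : l.IsChain (· > ·)) :
    IsShiftedIdeal (diagram l) where
  one_le_fst _ hb := hb.2.1
  fst_le_snd _ hb := hb.2.2.1
  mem_of_le := by
    rintro b c ⟨hlen, h1, _, hrow⟩ h1' hij' ⟨hle₁, hle₂⟩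
    have := getD_add_sub_le_getD hdec (Nat.sub_le_sub_right hle₁ 1) hlen
    exact ⟨by omega, h1', hij', by omega⟩

lemma resBox_le_of_mem_diagram {l : List ℕ} {n : ℕ} (hle : ∀ x ∈ l, x ≤ n) {b : ℕ × ℕ}
    (hb : b ∈ diagram l) : resBox b ≤ n := by
  obtain ⟨hlen, _, _, hrow⟩ := hb
  rw [List.getD_eq_getElem _ _ hlen] at hrow
  have := hle _ (List.getElem_mem hlen)
  rw [resBox]
  omega

/-- Increasing along rows and columns suffices: two comparable boxes are joined through the box in
the row of the first and the column of the second. -/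
lemma isSYT_iff_isLinearExtension {l : List ℕ} (hdec : l.IsChain (· > ·)) {N : ℕ}
    {f : Fin N → ℕ × ℕ} : IsSYT l N f ↔ IsLinearExtension (diagram l) f := by
  have hD := isShiftedIdeal_diagram hdec
  constructor
  · rintro ⟨hinj, hrange, hrow, hcol⟩
    have hmem a : f a ∈ diagram l := hrange.subset (Set.mem_range_self a)
    refine ⟨hinj, hrange, fun a b ⟨hle₁, hle₂⟩ ↦ ?_⟩
    have hcorner : ((f a).1, (f b).2) ∈ diagram l := hD.mem_of_le (hmem b)
      (hD.one_le_fst (hmem a) :) (hle₁.trans (hD.fst_le_snd (hmem b))) ⟨hle₁, le_rfl⟩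
    obtain ⟨c, hc⟩ := hrange.superset hcorner
    have hac : a ≤ c := by
      rcases hle₂.lt_or_eq with hlt | heq
      · exact (hrow a c (by rw [hc]) (by rwa [hc])).le
      · exact (hinj (hc.trans (Prod.ext rfl heq.symm))).ge
    have hcb : c ≤ b := by
      rcases hle₁.lt_or_eq with hlt | heq
      · exact (hcol c b (by rw [hc]) (by rwa [hc])).le
      · exact (hinj (hc.trans (Prod.ext heq rfl))).le
    exact hac.trans hcb
  · intro hf
    exact ⟨hf.injective, hf.range_eq,
      fun a b h₁ h₂ ↦ hf.lt_of_apply_lt (Prod.lt_iff.mpr (.inr ⟨h₁.le, h₂⟩)),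
      fun a b h₂ h₁ ↦ hf.lt_of_apply_lt (Prod.lt_iff.mpr (.inl ⟨h₁, h₂.le⟩))⟩

lemma isSYT_eq_isLinearExtension {l : List ℕ} (hdec : l.IsChain (· > ·)) (N : ℕ) :
    IsSYT l N = IsLinearExtension (diagram l) :=
  funext fun _ ↦ propext (isSYT_iff_isLinearExtension hdec)

lemma coe_diagFinset (l : List ℕ) : (diagFinset l : Set (ℕ × ℕ)) = diagram l := by
  ext ⟨i, j⟩
  simp only [diagFinset, diagram, Finset.coe_biUnion, Finset.coe_image, Set.mem_iUnion,
    Finset.mem_coe, Finset.mem_range, Set.mem_image, Finset.mem_Icc, Prod.mk.injEq,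
    Set.mem_ofPred_eq]
  constructor
  · rintro ⟨r, hr, c, hc, rfl, rfl⟩
    simp only [Nat.add_sub_cancel]
    omega
  · rintro ⟨hlen, h1, hij, hrow⟩
    exact ⟨i - 1, hlen, j, by omega, by omega, rfl⟩

lemma card_diagFinset (l : List ℕ) : (diagFinset l).card = l.sum := by
  have hrows : (Finset.range l.length : Set ℕ).PairwiseDisjoint fun i ↦
      (Finset.Icc (i + 1) (l.getD i 0 + i)).image fun j ↦ (i + 1, j) := by
    intro i _ i' _ hne
    simp only [Function.onFun, Finset.disjoint_left, Finset.mem_image]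
    rintro _ ⟨_, _, rfl⟩ ⟨_, _, h⟩
    exact hne (by simpa using (congrArg Prod.fst h).symm)
  rw [diagFinset, Finset.card_biUnion hrows, ← Fin.sum_univ_getElem,
    ← Fin.sum_univ_eq_sum_range fun i ↦ _]
  refine Finset.sum_congr rfl fun i _ ↦ ?_
  rw [Finset.card_image_of_injective _ (Prod.mk_right_injective _)]
  simp

lemma exists_isLinearExtension_diagram (l : List ℕ) :
    ∃ f : Fin l.sum → ℕ × ℕ, IsLinearExtension (diagram l) f :=
  coe_diagFinset l ▸ IsLinearExtension.exists_of_card_eq (card_diagFinset l)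

lemma resSeq_mem_Iβ {n : ℕ} (hn : 0 < n) {l : List ℕ} {N : ℕ} {f : Fin N → ℕ × ℕ}
    (hf : IsLinearExtension (diagram l) f) :
    resSeq n hn f ∈ Iβ (AB n) (Pi.single ⟨0, hn⟩ 1) (wtP n hn l) N := by
  have himage : Finset.univ.map ⟨f, hf.injective⟩ = diagFinset l :=
    Finset.coe_injective (by simp [hf.range_eq, coe_diagFinset])
  calc ∑ p, αcol (AB n) (resSeq n hn f p)
      = ∑ a, αcol (AB n) (resFin n hn (f a)) :=
        Equiv.sum_comp Fin.revPerm fun a ↦ αcol (AB n) (resFin n hn (f a))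
    _ = ∑ b ∈ diagFinset l, αcol (AB n) (resFin n hn b) := by rw [← himage, Finset.sum_map]; rfl
    _ = _ := by
        funext i
        simp [wtP]

section Polynomials

variable {k A B : Type} [Field k] [Ring A] [Algebra k A] [Ring B] [Algebra k B]

lemma map_eval2 (φ : A →ₐ[k] B) (p : MvPolynomial (Fin 2) k) (a b : A) :
    φ (eval2 k p a b) = eval2 k p (φ a) (φ b) := by
  simp [eval2]

lemma map_eval3 (φ : A →ₐ[k] B) (p : MvPolynomial (Fin 3) k) (a b c : A) :
    φ (eval3 k p a b c) = eval3 k p (φ a) (φ b) (φ c) := by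
  simp [eval3]

lemma eval2_zero_zero (p : MvPolynomial (Fin 2) k) :
    eval2 k p (0 : A) 0 = algebraMap k A (MvPolynomial.coeff 0 p) := by
  rw [eval2, Finset.sum_eq_single 0]
  · simp
  · intro d _ hd
    rw [Ne, Finsupp.ext_iff, Fin.forall_fin_two] at hd
    by_cases h : d 0 = 0 <;> simp_all
  · simp +contextual

lemma eval3_zero_zero_zero (p : MvPolynomial (Fin 3) k) :
    eval3 k p (0 : A) 0 0 = algebraMap k A (MvPolynomial.coeff 0 p) := by
  rw [eval3, Finset.sum_eq_single 0]
  · simp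
  · intro d _ hd
    rw [Ne, Finsupp.ext_iff, Fin.forall_fin_succ, Fin.forall_fin_two] at hd
    by_cases h : d 0 = 0 <;> by_cases h' : d 1 = 0 <;> simp_all
  · simp +contextual

open MvPolynomial in
lemma X_sub_X_mul_Qbar (p : MvPolynomial (Fin 2) k) :
    (X 0 - X 2) * Qbar k p = rename (fun i : Fin 2 ↦ if i = 0 then (0 : Fin 3) else 1) p -
      rename (fun i : Fin 2 ↦ if i = 0 then (2 : Fin 3) else 1) p := by
  have hX1 : finSuccEquiv k 2 (X 1) = Polynomial.C (X 0) := finSuccEquiv_X_succ (j := 0)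
  have hX2 : finSuccEquiv k 2 (X 2) = Polynomial.C (X 1) := finSuccEquiv_X_succ (j := 1)
  apply (finSuccEquiv k 2).injective
  rw [map_mul, Qbar, AlgEquiv.apply_symm_apply, map_sub (finSuccEquiv k 2) (X 0), hX2,
    finSuccEquiv_X_zero, Polynomial.mul_divByMonic_eq_iff_isRoot, Polynomial.IsRoot.def, map_sub,
    Polynomial.eval_sub, sub_eq_zero]
  induction p using MvPolynomial.induction_on with
  | C a => simp only [rename_C]
  | add p q hp hq => simp only [map_add, Polynomial.eval_add, hp, hq]
  | mul_X p i hp =>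
    rw [map_mul, map_mul, map_mul, map_mul, Polynomial.eval_mul, Polynomial.eval_mul, hp]
    fin_cases i <;> simp [finSuccEquiv_X_zero, hX1, hX2]

open MvPolynomial in
lemma coeff_zero_Qbar (p : MvPolynomial (Fin 2) k) :
    coeff 0 (Qbar k p) = coeff (Finsupp.single 0 1) p := by
  have h := congrArg (coeff (Finsupp.single 0 1)) (X_sub_X_mul_Qbar p)
  have hrename : coeff (Finsupp.single 0 1)
      (rename (fun i : Fin 2 ↦ if i = 0 then (0 : Fin 3) else 1) p) =
      coeff (Finsupp.single 0 1) p := by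
    have hinj : Function.Injective fun i : Fin 2 ↦ if i = 0 then (0 : Fin 3) else 1 := by decide
    simpa using coeff_rename_mapDomain _ hinj p (Finsupp.single 0 1)
  have hrename' : coeff (Finsupp.single 0 1)
      (rename (fun i : Fin 2 ↦ if i = 0 then (2 : Fin 3) else 1) p) = 0 := by
    refine coeff_rename_eq_zero _ _ _ fun u hu ↦ ?_
    have := DFunLike.congr_fun hu 0
    simp [Finsupp.mapDomain, Finsupp.sum_fintype] at this
  simpa [sub_mul, coeff_X_mul', hrename, hrename'] using h

end Polynomials

section CartanData

variable {k : Type} [Field k] {n : ℕ} {A : Fin n → Fin n → ℤ} {d : Fin n → ℤ}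
  {Q : Fin n → Fin n → MvPolynomial (Fin 2) k}

lemma QAdmissible.coeff_zero (hQ : QAdmissible k A d Q) {i j : Fin n} (hij : i ≠ j)
    (h : d i * A i j ≠ 0) : MvPolynomial.coeff 0 (Q i j) = 0 := by
  by_contra hc
  have := hQ.2.2.2.1 i j hij 0 (MvPolynomial.mem_support_iff.mpr hc)
  simp_all

lemma QAdmissible.coeff_single_zero_one (hQ : QAdmissible k A d Q) {i j : Fin n} (hij : i ≠ j)
    (hd : d i ≠ 0) (hA : A i j ≠ -1) :
    MvPolynomial.coeff (Finsupp.single 0 1) (Q i j) = 0 := by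
  by_contra hc
  have hdeg := hQ.2.2.2.1 i j hij _ (MvPolynomial.mem_support_iff.mpr hc)
  have hA' : d i * (A i j + 1) = 0 := by
    simp only [Finsupp.single_eq_same, Nat.cast_one, mul_one, ne_eq, one_ne_zero, not_false_eq_true,
      Finsupp.single_eq_of_ne, Nat.cast_zero, mul_zero, add_zero] at hdeg
    linarith
  have := (mul_eq_zero.mp hA').resolve_left hd
  omega

lemma dB_ne_zero (i : Fin n) : dB n i ≠ 0 := by
  unfold dB
  split_ifs <;> norm_num

lemma AB_eq_zero_iff {i j : Fin n} : AB n i j = 0 ↔ (i : ℕ) + 2 ≤ j ∨ (j : ℕ) + 2 ≤ i := by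
  simp only [AB, Fin.ext_iff]
  split_ifs <;> grind

lemma AB_eq_neg_two {i j : Fin n} (hi : (i : ℕ) = 0) (hj : (j : ℕ) = 1) : AB n i j = -2 := by
  simp [AB, Fin.ext_iff, hi, hj]

end CartanData

section Residues

variable {D : Set (ℕ × ℕ)} {n N : ℕ} {f g : Fin N → ℕ × ℕ}

lemma resFin_add_one (hn : 0 < n) {b : ℕ × ℕ} (hb : b.1 ≤ b.2) (hres : resBox b ≤ n) :
    (resFin n hn b : ℕ) + 1 = resBox b := by
  simp only [resFin, resBox] at *
  omega

/-- Reversal, because residue sequences list the entries in decreasing order. -/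
lemma rev_succ_covBy_rev {j : ℕ} (h : j + 1 < N) :
    Fin.rev ⟨j + 1, h⟩ ⋖ Fin.rev ⟨j, Nat.lt_of_succ_lt h⟩ := by
  simp only [Fin.covBy_iff, Fin.val_rev, Order.covBy_iff_add_one_eq]
  omega

lemma swapEnt_eq_comp_swap {j : ℕ} (h : j + 1 < N) (f : Fin N → ℕ × ℕ) :
    swapEnt j h f = f ∘ Equiv.swap (Fin.rev ⟨j + 1, h⟩) (Fin.rev ⟨j, Nat.lt_of_succ_lt h⟩) := by
  rw [swapEnt, Equiv.swap_comm]

lemma exists_swapEnt_eq_comp_swap {a b : Fin N} (hab : a ⋖ b) :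
    ∃ (j : ℕ) (h : j + 1 < N), ∀ f, swapEnt j h f = f ∘ Equiv.swap a b := by
  rw [Fin.covBy_iff, Order.covBy_iff_add_one_eq] at hab
  have hj : (b.rev : ℕ) + 1 < N := by
    rw [Fin.val_rev]
    omega
  have ha : Fin.rev ⟨b.rev + 1, hj⟩ = a := Fin.ext (by simp only [Fin.val_rev]; omega)
  refine ⟨b.rev, hj, fun f ↦ ?_⟩
  rw [swapEnt_eq_comp_swap, ha, Fin.eta, Fin.rev_rev]

lemma swapEnt_swapEnt {j : ℕ} (h : j + 1 < N) (f : Fin N → ℕ × ℕ) :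
    swapEnt j h (swapEnt j h f) = f := by
  funext a
  simp [swapEnt]

lemma swapEnt_comm {a b : ℕ} (ha : a + 1 < N) (hb : b + 1 < N) (hab : a + 1 < b ∨ b + 1 < a)
    (f : Fin N → ℕ × ℕ) : swapEnt a ha (swapEnt b hb f) = swapEnt b hb (swapEnt a ha f) := by
  have hdisj := Equiv.Perm.disjoint_swap_swap (x := Fin.rev ⟨a, Nat.lt_of_succ_lt ha⟩)
    (y := Fin.rev ⟨a + 1, ha⟩) (z := Fin.rev ⟨b, Nat.lt_of_succ_lt hb⟩)
    (t := Fin.rev ⟨b + 1, hb⟩) (by simp; omega)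
  exact congrArg (fun σ : Equiv.Perm (Fin N) ↦ f ∘ σ) hdisj.commute.symm.eq

lemma swapEnt_swapEnt_swapEnt {j : ℕ} (h₁ : j + 1 < N) (h₂ : j + 2 < N) (f : Fin N → ℕ × ℕ) :
    swapEnt j h₁ (swapEnt (j + 1) h₂ (swapEnt j h₁ f)) =
      f ∘ Equiv.swap (Fin.rev ⟨j + 2, h₂⟩) (Fin.rev ⟨j, Nat.lt_of_succ_lt h₁⟩) := by
  have hword := Equiv.swap_mul_swap_mul_swap (x := Fin.rev ⟨j + 2, h₂⟩)
    (y := Fin.rev ⟨j + 1, h₁⟩) (z := Fin.rev ⟨j, Nat.lt_of_succ_lt h₁⟩) (by simp) (by simp)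
  rw [Equiv.swap_comm (Fin.rev ⟨j, _⟩) (Fin.rev ⟨j + 2, h₂⟩)] at hword
  simp only [swapEnt_eq_comp_swap]
  exact congrArg (fun σ : Equiv.Perm (Fin N) ↦ f ∘ σ) hword

lemma swapEnt_swapEnt_swapEnt_succ {j : ℕ} (h₁ : j + 1 < N) (h₂ : j + 2 < N)
    (f : Fin N → ℕ × ℕ) :
    swapEnt (j + 1) h₂ (swapEnt j h₁ (swapEnt (j + 1) h₂ f)) =
      f ∘ Equiv.swap (Fin.rev ⟨j + 2, h₂⟩) (Fin.rev ⟨j, Nat.lt_of_succ_lt h₁⟩) := by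
  have hword := Equiv.swap_mul_swap_mul_swap (x := Fin.rev ⟨j, Nat.lt_of_succ_lt h₁⟩)
    (y := Fin.rev ⟨j + 1, h₁⟩) (z := Fin.rev ⟨j + 2, h₂⟩) (by simp) (by simp)
  exact congrArg (fun σ : Equiv.Perm (Fin N) ↦ f ∘ σ) hword

lemma swapSeq_swapSeq {j : ℕ} (h : j + 1 < N) (ν : Fin N → Fin n) :
    swapSeq j h (swapSeq j h ν) = ν := by
  funext a
  simp [swapSeq, posSwap]

lemma resSeq_swapEnt (hn : 0 < n) {j : ℕ} (h : j + 1 < N) (f : Fin N → ℕ × ℕ) :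
    resSeq n hn (swapEnt j h f) = swapSeq j h (resSeq n hn f) := by
  funext p
  simp [resSeq, swapSeq, swapEnt, posSwap, Fin.rev_injective.map_swap]

namespace IsShiftedIdeal

variable (hD : IsShiftedIdeal D) (hres : ∀ b ∈ D, resBox b ≤ n) (hn : 0 < n)
  (hf : IsLinearExtension D f)

include hD hres hf

lemma resSeq_add_one (p : Fin N) : (resSeq n hn f p : ℕ) + 1 = resBox (f p.rev) :=
  resFin_add_one hn (hD.fst_le_snd (hf.mem _)) (hres _ (hf.mem _))

lemma isLinearExtension_swapEnt_iff {j : ℕ} (h : j + 1 < N) :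
    IsLinearExtension D (swapEnt j h f) ↔
      AB n (resSeq n hn f ⟨j, Nat.lt_of_succ_lt h⟩) (resSeq n hn f ⟨j + 1, h⟩) = 0 := by
  have hcov := rev_succ_covBy_rev h
  have hj := hD.resSeq_add_one hres hn hf ⟨j, Nat.lt_of_succ_lt h⟩
  have hj' := hD.resSeq_add_one hres hn hf ⟨j + 1, h⟩
  rw [swapEnt_eq_comp_swap, hf.comp_swap_iff hcov, AB_eq_zero_iff]
  by_cases hle : f (Fin.rev ⟨j + 1, h⟩) ≤ f (Fin.rev ⟨j, Nat.lt_of_succ_lt h⟩)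
  · have := hD.resBox_apply_of_le hf hcov hle
    exact iff_of_false (not_not.mpr hle) (by omega)
  · have := hD.resBox_apply_of_not_le hf hcov hle
    exact iff_of_true hle (by omega)

lemma resSeq_ne_resSeq_succ {j : ℕ} (h : j + 1 < N) :
    resSeq n hn f ⟨j, Nat.lt_of_succ_lt h⟩ ≠ resSeq n hn f ⟨j + 1, h⟩ := by
  intro heq
  have hcov := rev_succ_covBy_rev h
  have hj := hD.resSeq_add_one hres hn hf ⟨j, Nat.lt_of_succ_lt h⟩
  have hj' := hD.resSeq_add_one hres hn hf ⟨j + 1, h⟩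
  rw [heq] at hj
  by_cases hle : f (Fin.rev ⟨j + 1, h⟩) ≤ f (Fin.rev ⟨j, Nat.lt_of_succ_lt h⟩)
  · have := hD.resBox_apply_of_le hf hcov hle
    omega
  · have := hD.resBox_apply_of_not_le hf hcov hle
    omega

lemma AB_resSeq_ne_neg_one {j : ℕ} (h₁ : j + 1 < N) (h₂ : j + 2 < N)
    (heq : resSeq n hn f ⟨j, Nat.lt_of_succ_lt h₁⟩ = resSeq n hn f ⟨j + 2, h₂⟩) :
    AB n (resSeq n hn f ⟨j, Nat.lt_of_succ_lt h₁⟩) (resSeq n hn f ⟨j + 1, h₁⟩) ≠ -1 := by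
  have hcov := rev_succ_covBy_rev h₁
  have hcov' : Fin.rev ⟨j + 2, h₂⟩ ⋖ Fin.rev ⟨j + 1, h₁⟩ := rev_succ_covBy_rev h₂
  have hj := hD.resSeq_add_one hres hn hf ⟨j, Nat.lt_of_succ_lt h₁⟩
  have hj₁ := hD.resSeq_add_one hres hn hf ⟨j + 1, h₁⟩
  have hj₂ := hD.resSeq_add_one hres hn hf ⟨j + 2, h₂⟩
  rw [heq] at hj ⊢
  by_cases hle : f (Fin.rev ⟨j + 1, h₁⟩) ≤ f (Fin.rev ⟨j, Nat.lt_of_succ_lt h₁⟩)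
  · by_cases hle' : f (Fin.rev ⟨j + 2, h₂⟩) ≤ f (Fin.rev ⟨j + 1, h₁⟩)
    · have := hD.resBox_eq_one_of_resBox_eq hf hcov' hcov hle' hle (by omega)
      rw [AB_eq_neg_two (by omega) (by omega)]
      norm_num
    · have := hD.resBox_apply_of_not_le hf hcov' hle'
      rw [AB_eq_zero_iff.mpr (by omega)]
      norm_num
  · have := hD.resBox_apply_of_not_le hf hcov hle
    rw [AB_eq_zero_iff.mpr (by omega)]
    norm_num

lemma eq_of_resSeq_eq (hg : IsLinearExtension D g) (heq : resSeq n hn f = resSeq n hn g) :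
    f = g := by
  refine hf.eq_of_comp_eq hg (fun x hx y hy ↦ hD.le_or_le_of_resBox_eq hx hy) (funext fun a ↦ ?_)
  have hfa := hD.resSeq_add_one hres hn hf a.rev
  have hga := hD.resSeq_add_one hres hn hg a.rev
  rw [heq] at hfa
  simpa using hfa.symm.trans hga

end IsShiftedIdeal

end Residues

section Operators

variable {k : Type} [Field k] {N n : ℕ} {P : (Fin N → ℕ × ℕ) → Prop} {f : Fin N → ℕ × ℕ}

variable (k P) in
/-- The basis vector of `TabV k P` given by the filling `f`; it is `0` if `f` does not satisfy
`P`, which matches the convention `τ_j T = 0` when `s_j T` is not a tableau. -/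
noncomputable def tabVec (f : Fin N → ℕ × ℕ) : TabV k P := fun T ↦ if f = T.1 then 1 else 0

lemma tabVec_eq_zero (hf : ¬ P f) : tabVec k P f = 0 := by
  funext T
  exact if_neg fun h : f = T.1 ↦ hf (h ▸ T.2)

lemma tabVec_eq_single (T : {f : Fin N → ℕ × ℕ // P f}) : tabVec k P T.1 = Pi.single T 1 := by
  funext T'
  simp [tabVec, Pi.single_apply, Subtype.ext_iff, eq_comm]

lemma end_ext_tabVec [Finite {f : Fin N → ℕ × ℕ // P f}] {φ ψ : Module.End k (TabV k P)}
    (h : ∀ f, P f → φ (tabVec k P f) = ψ (tabVec k P f)) : φ = ψ := by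
  refine (Pi.basisFun k _).ext fun T ↦ ?_
  simpa [tabVec_eq_single] using h T.1 T.2

lemma tOpTab_tabVec {j : ℕ} (h : j + 1 < N) (hf : P (swapEnt j h f) → P f) :
    tOpTab k P j h (tabVec k P f) = tabVec k P (swapEnt j h f) := by
  funext T
  have hswap : f = swapEnt j h T.1 ↔ swapEnt j h f = T.1 :=
    ⟨fun e ↦ by rw [e, swapEnt_swapEnt], fun e ↦ by rw [← e, swapEnt_swapEnt]⟩
  by_cases hT : P (swapEnt j h T.1)
  · simp [tOpTab, hT, tabVec, hswap]
  · have hne : swapEnt j h f ≠ T.1 := fun e ↦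
      hT (by simpa [← e, swapEnt_swapEnt] using hf (e ▸ T.2))
    simp [tOpTab, hT, tabVec, hne]

lemma eOpTab_apply (hn : 0 < n) (μ : Fin N → Fin n) (v : TabV k P)
    (T : {f : Fin N → ℕ × ℕ // P f}) :
    eOpTab k n hn P μ v T = if resSeq n hn T.1 = μ then v T else 0 := by
  simp only [eOpTab, LinearMap.pi_apply]
  split_ifs <;> rfl

lemma eOpTab_tabVec (hn : 0 < n) (μ : Fin N → Fin n) (f : Fin N → ℕ × ℕ) :
    eOpTab k n hn P μ (tabVec k P f) = if resSeq n hn f = μ then tabVec k P f else 0 := by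
  funext T
  by_cases hf : f = T.1
  · subst hf
    rw [eOpTab_apply]
    split_ifs <;> rfl
  · rw [eOpTab_apply]
    split_ifs <;> simp [tabVec, hf]

lemma eOpTab_mul_eOpTab_self (hn : 0 < n) (μ : Fin N → Fin n) :
    eOpTab k n hn P μ * eOpTab k n hn P μ = eOpTab k n hn P μ := by
  ext v T
  simp +contextual [eOpTab_apply]

lemma eOpTab_mul_eOpTab_of_ne (hn : 0 < n) {μ ν : Fin N → Fin n} (hne : μ ≠ ν) :
    eOpTab k n hn P μ * eOpTab k n hn P ν = 0 := by
  ext v T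
  simp +contextual [eOpTab_apply, hne]

lemma sum_eOpTab (hn : 0 < n) : ∑ μ, eOpTab k n hn P μ = 1 := by
  ext v T
  simp [eOpTab_apply]

lemma eOpTab_eq_zero (hn : 0 < n) {μ : Fin N → Fin n} (h : ∀ f, P f → resSeq n hn f ≠ μ) :
    eOpTab k n hn P μ = 0 := by
  ext v T
  simp [eOpTab_apply, h T.1 T.2]

lemma tOpTab_mul_eOpTab [Finite {f : Fin N → ℕ × ℕ // P f}] (hn : 0 < n) {j : ℕ} (h : j + 1 < N)
    (ν : Fin N → Fin n) :
    tOpTab k P j h * eOpTab k n hn P ν = eOpTab k n hn P (swapSeq j h ν) * tOpTab k P j h := by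
  refine end_ext_tabVec fun f hf ↦ ?_
  have hiff : swapSeq j h (resSeq n hn f) = swapSeq j h ν ↔ resSeq n hn f = ν :=
    (Function.LeftInverse.injective (swapSeq_swapSeq h)).eq_iff
  rw [Module.End.mul_apply, Module.End.mul_apply, tOpTab_tabVec h fun _ ↦ hf, eOpTab_tabVec,
    eOpTab_tabVec, resSeq_swapEnt]
  simp only [hiff]
  split_ifs
  · exact tOpTab_tabVec h fun _ ↦ hf
  · exact map_zero _

end Operators

section LinearExtensionOperators

variable {k : Type} [Field k] {N : ℕ} {D : Set (ℕ × ℕ)} {f : Fin N → ℕ × ℕ}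

lemma tOpTab_tOpTab_tabVec {a b : ℕ} (ha : a + 1 < N) (hb : b + 1 < N) (hab : a ≠ b)
    (hf : IsLinearExtension D f) :
    tOpTab k (IsLinearExtension D) a ha (tOpTab k (IsLinearExtension D) b hb
      (tabVec k (IsLinearExtension D) f)) =
      tabVec k (IsLinearExtension D) (swapEnt a ha (swapEnt b hb f)) := by
  rw [tOpTab_tabVec hb fun _ ↦ hf, tOpTab_tabVec ha]
  simp only [swapEnt_eq_comp_swap]
  exact hf.comp_swap_of_comp_swap_comp_swap (rev_succ_covBy_rev hb) (rev_succ_covBy_rev ha)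
    (by simpa using hab.symm)

lemma tOpTab_commute {a b : ℕ} (ha : a + 1 < N) (hb : b + 1 < N) (hab : a + 1 < b ∨ b + 1 < a) :
    Commute (tOpTab k (IsLinearExtension D) a ha) (tOpTab k (IsLinearExtension D) b hb) := by
  refine end_ext_tabVec fun f hf ↦ ?_
  rw [Module.End.mul_apply, Module.End.mul_apply, tOpTab_tOpTab_tabVec ha hb (by omega) hf,
    tOpTab_tOpTab_tabVec hb ha (by omega) hf, swapEnt_comm ha hb hab]

lemma tOpTab_braid {j : ℕ} (h₁ : j + 1 < N) (h₂ : j + 2 < N) :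
    tOpTab k (IsLinearExtension D) (j + 1) h₂ * tOpTab k (IsLinearExtension D) j h₁ *
        tOpTab k (IsLinearExtension D) (j + 1) h₂ =
      tOpTab k (IsLinearExtension D) j h₁ * tOpTab k (IsLinearExtension D) (j + 1) h₂ *
        tOpTab k (IsLinearExtension D) j h₁ := by
  have hcov := rev_succ_covBy_rev h₁
  have hcov' : Fin.rev ⟨j + 2, h₂⟩ ⋖ Fin.rev ⟨j + 1, h₁⟩ := rev_succ_covBy_rev h₂
  refine end_ext_tabVec fun f hf ↦ ?_
  simp only [Module.End.mul_apply]
  rw [tOpTab_tOpTab_tabVec h₁ h₂ (by omega) hf, tOpTab_tOpTab_tabVec h₂ h₁ (by omega) hf,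
    tOpTab_tabVec, tOpTab_tabVec, swapEnt_swapEnt_swapEnt_succ h₁ h₂, swapEnt_swapEnt_swapEnt h₁ h₂]
  · rw [swapEnt_swapEnt_swapEnt h₁ h₂]
    simp only [swapEnt_eq_comp_swap]
    exact fun h ↦ (hf.comp_swap_comp_swap_of_comp_swap hcov' hcov h).2
  · rw [swapEnt_swapEnt_swapEnt_succ h₁ h₂]
    simp only [swapEnt_eq_comp_swap]
    exact fun h ↦ (hf.comp_swap_comp_swap_of_comp_swap hcov' hcov h).1

end LinearExtensionOperators

namespace IsShiftedIdeal

variable {k : Type} [Field k] {n N : ℕ} {D : Set (ℕ × ℕ)} {ν : Fin N → Fin n}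
  {Q : Fin n → Fin n → MvPolynomial (Fin 2) k}
  (hD : IsShiftedIdeal D) (hres : ∀ b ∈ D, resBox b ≤ n) (hn : 0 < n)

include hD

lemma eOpTab_eq_zero_of_last_ne {p : Fin N} (hp : (p : ℕ) + 1 = N) (hν : ν p ≠ ⟨0, hn⟩) :
    eOpTab k n hn (IsLinearExtension D) ν = 0 := by
  refine eOpTab_eq_zero hn fun f hf hfν ↦ hν ?_
  have hmin : IsMin p.rev := fun b _ ↦ by
    rw [Fin.le_def, Fin.val_rev]
    omega
  have hbox := hD.resBox_apply_of_isMin hf hmin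
  have hmem := hD.fst_le_snd (hf.mem p.rev)
  have := resFin_add_one hn hmem (by omega)
  rw [← hfν]
  exact Fin.ext (by simp only [resSeq]; omega)

include hres

lemma tOpTab_mul_tOpTab_mul_eOpTab (hQ : QAdmissible k (AB n) (dB n) Q) {j : ℕ} (h : j + 1 < N) :
    tOpTab k (IsLinearExtension D) j h * tOpTab k (IsLinearExtension D) j h *
        eOpTab k n hn (IsLinearExtension D) ν =
      algebraMap k _ (MvPolynomial.coeff 0 (Q (ν ⟨j, Nat.lt_of_succ_lt h⟩) (ν ⟨j + 1, h⟩))) *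
        eOpTab k n hn (IsLinearExtension D) ν := by
  refine end_ext_tabVec fun f hf ↦ ?_
  simp only [Module.End.mul_apply, eOpTab_tabVec]
  split_ifs with hν
  swap
  · simp only [map_zero]
  subst hν
  have hne := hD.resSeq_ne_resSeq_succ hres hn hf h
  rw [tOpTab_tabVec h fun _ ↦ hf]
  by_cases hswap : IsLinearExtension D (swapEnt j h f)
  · have hA := (hD.isLinearExtension_swapEnt_iff hres hn hf h).mp hswap
    rw [tOpTab_tabVec h fun _ ↦ hswap, swapEnt_swapEnt, hQ.2.2.1 _ _ hne (by rw [hA, mul_zero])]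
    simp
  · have hA := (hD.isLinearExtension_swapEnt_iff hres hn hf h).not.mp hswap
    rw [tabVec_eq_zero hswap, map_zero, hQ.coeff_zero hne (mul_ne_zero (dB_ne_zero _) hA)]
    simp

lemma eOpTab_eq_zero_of_eq_succ {j : ℕ} (h : j + 1 < N)
    (hν : ν ⟨j, Nat.lt_of_succ_lt h⟩ = ν ⟨j + 1, h⟩) :
    eOpTab k n hn (IsLinearExtension D) ν = 0 :=
  eOpTab_eq_zero hn fun _ hf hfν ↦ hD.resSeq_ne_resSeq_succ hres hn hf h (hfν ▸ hν)

lemma coeff_zero_Qbar_mul_eOpTab (hQ : QAdmissible k (AB n) (dB n) Q) {j : ℕ} (h₁ : j + 1 < N)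
    (h₂ : j + 2 < N) (hν : ν ⟨j, Nat.lt_of_succ_lt h₁⟩ = ν ⟨j + 2, h₂⟩) :
    algebraMap k _ (MvPolynomial.coeff 0
        (Qbar k (Q (ν ⟨j, Nat.lt_of_succ_lt h₁⟩) (ν ⟨j + 1, h₁⟩)))) *
      eOpTab k n hn (IsLinearExtension D) ν = 0 := by
  by_cases hex : ∃ f, IsLinearExtension D f ∧ resSeq n hn f = ν
  · obtain ⟨f, hf, rfl⟩ := hex
    rw [coeff_zero_Qbar, hQ.coeff_single_zero_one (hD.resSeq_ne_resSeq_succ hres hn hf h₁)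
      (dB_ne_zero _) (hD.AB_resSeq_ne_neg_one hres hn hf h₁ h₂ hν), map_zero, zero_mul]
  · rw [eOpTab_eq_zero hn fun f hf hfν ↦ hex ⟨f, hf, hfν⟩, mul_zero]

end IsShiftedIdeal

section Action

variable {k : Type} [Field k] {n N : ℕ} {P : (Fin N → ℕ × ℕ) → Prop}

variable (k P) in
/-- The prescribed action of the generators on tableaux, as a representation of the free algebra. -/
noncomputable def tableauAction (hn : 0 < n) : FA k n N →ₐ[k] Module.End k (TabV k P) :=
  FreeAlgebra.lift k fun
    | .e ν => eOpTab k n hn P ν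
    | .x _ => 0
    | .t j h => tOpTab k P j h

@[simp]
lemma tableauAction_Eg (hn : 0 < n) (ν : Fin N → Fin n) :
    tableauAction k P hn (Eg k ν) = eOpTab k n hn P ν :=
  FreeAlgebra.lift_ι_apply _ _

@[simp]
lemma tableauAction_Xg (hn : 0 < n) (p : Fin N) : tableauAction k P hn (Xg k p) = 0 :=
  FreeAlgebra.lift_ι_apply _ _

@[simp]
lemma tableauAction_Tg (hn : 0 < n) (j : ℕ) (h : j + 1 < N) :
    tableauAction k P hn (Tg k j h) = tOpTab k P j h :=
  FreeAlgebra.lift_ι_apply _ _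

end Action

namespace IsShiftedIdeal

variable {k : Type} [Field k] {n N : ℕ} {D : Set (ℕ × ℕ)}
  {Q : Fin n → Fin n → MvPolynomial (Fin 2) k}
  (hD : IsShiftedIdeal D) (hres : ∀ b ∈ D, resBox b ≤ n) (hn : 0 < n)

include hD

lemma tableauAction_Xg_pow_mul_Eg {p : Fin N} (hp : (p : ℕ) + 1 = N) (ν : Fin N → Fin n) :
    tableauAction k (IsLinearExtension D) hn
      (Xg k p ^ ((Pi.single ⟨0, hn⟩ 1 : Fin n → ℤ) (ν p)).toNat * Eg k ν) = 0 := by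
  by_cases hν : ν p = ⟨0, hn⟩
  · simp [hν]
  · simp [hD.eOpTab_eq_zero_of_last_ne hn hp hν]

include hres

lemma tableauAction_eq_of_rel (hQ : QAdmissible k (AB n) (dB n) Q) {S : Set (Fin N → Fin n)}
    (hS : ∀ f, IsLinearExtension D f → resSeq n hn f ∈ S) {x y : FA k n N} (h : Rel k Q S x y) :
    tableauAction k (IsLinearExtension D) hn x = tableauAction k (IsLinearExtension D) hn y := by
  cases h with
  | e_orth ν ν' hne => simpa using eOpTab_mul_eOpTab_of_ne hn hne
  | e_idem ν => simpa using eOpTab_mul_eOpTab_self hn ν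
  | e_sum => simpa using sum_eOpTab hn
  | e_out ν hν => simpa using eOpTab_eq_zero hn fun f hf hfν ↦ hν (by simpa [hfν] using hS f hf)
  | xx p q => simp
  | xe p ν => simp
  | te j h ν => simpa using tOpTab_mul_eOpTab hn h ν
  | tt a ha b hb hab => simpa using (tOpTab_commute ha hb hab).eq
  | tsq j h ν =>
    simpa [map_eval2, eval2_zero_zero] using hD.tOpTab_mul_tOpTab_mul_eOpTab hres hn hQ h
  | tx_left j h ν hν => simpa using hD.eOpTab_eq_zero_of_eq_succ hres hn h hν
  | tx_right j h ν hν => simpa using (hD.eOpTab_eq_zero_of_eq_succ hres hn h hν).symm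
  | tx_comm j h ν p _ => simp
  | braid_ne j h₁ h₂ ν _ => simp [tOpTab_braid h₁ h₂]
  | braid_eq j h₁ h₂ ν hν =>
    simp only [map_add, map_mul, map_eval3, tableauAction_Eg, tableauAction_Xg, tableauAction_Tg,
      eval3_zero_zero_zero, tOpTab_braid h₁ h₂, hD.coeff_zero_Qbar_mul_eOpTab hres hn hQ h₁ h₂ hν,
      add_zero]

lemma eOpTab_resSeq (T : {f : Fin N → ℕ × ℕ // IsLinearExtension D f})
    (v : TabV k (IsLinearExtension D)) :
    eOpTab k n hn (IsLinearExtension D) (resSeq n hn T.1) v =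
      v T • tabVec k (IsLinearExtension D) T.1 := by
  funext T'
  have hiff : resSeq n hn T'.1 = resSeq n hn T.1 ↔ T' = T :=
    ⟨fun h ↦ Subtype.ext (hD.eq_of_resSeq_eq hres hn T'.2 T.2 h), fun h ↦ by rw [h]⟩
  rw [eOpTab_apply, tabVec_eq_single]
  by_cases h : T' = T <;> simp [hiff, h]

lemma eq_bot_or_eq_top_of_invariant {U : Submodule k (TabV (N := N) k (IsLinearExtension D))}
    (he : ∀ ν, ∀ v ∈ U, eOpTab k n hn (IsLinearExtension D) ν v ∈ U)
    (ht : ∀ j h, ∀ v ∈ U, tOpTab k (IsLinearExtension D) j h v ∈ U) : U = ⊥ ∨ U = ⊤ := by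
  refine or_iff_not_imp_left.mpr fun hU ↦ ?_
  obtain ⟨v, hv, hv0⟩ := U.exists_mem_ne_zero_of_ne_bot hU
  obtain ⟨T, hT⟩ := Function.ne_iff.mp hv0
  have hTU : tabVec k (IsLinearExtension D) T.1 ∈ U := by
    have := he (resSeq n hn T.1) v hv
    rwa [hD.eOpTab_resSeq hres hn, U.smul_mem_iff hT] at this
  have hall (T' : {f : Fin N → ℕ × ℕ // IsLinearExtension D f}) :
      tabVec k (IsLinearExtension D) T'.1 ∈ U := by
    refine T.2.adjacent_swap_induction (S := fun f ↦ tabVec k (IsLinearExtension D) f ∈ U) T'.2 hTU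
      fun q a b hq hab _ hqU ↦ ?_
    obtain ⟨j, h, hswap⟩ := exists_swapEnt_eq_comp_swap hab
    rw [← hswap, ← tOpTab_tabVec h fun _ ↦ hq]
    exact ht j h _ hqU
  have := Fintype.ofFinite {f : Fin N → ℕ × ℕ // IsLinearExtension D f}
  refine eq_top_iff.mpr fun w _ ↦ ?_
  rw [pi_eq_sum_univ' w]
  exact U.sum_mem fun T' _ ↦ U.smul_mem _ (by simpa only [tabVec_eq_single] using hall T')

end IsShiftedIdeal

theorem sp_is_simple_homogeneous_module_B
    (k : Type) [Field k] (n : ℕ) (hn : 2 ≤ n)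
    (Q : Fin n → Fin n → MvPolynomial (Fin 2) k)
    (hQ : QAdmissible k (AB n) (dB n) Q)
    (l : List ℕ) (hdec : l.Chain' (· > ·)) (hpos : ∀ x ∈ l, 0 < x)
    (hle : ∀ x ∈ l, x ≤ n) :
    ∃ ρ : RingQuot (Rel k Q
          (Iβ (AB n) (Pi.single ⟨0, by omega⟩ 1) (wtP n (by omega) l) l.sum)) →ₐ[k]
        Module.End k (TabV k (IsSYT l l.sum)),
      -- the prescribed operators define an action of R(β)
      (∀ μ : Fin l.sum → Fin n,
        ρ (RingQuot.mkAlgHom k _ (Eg k μ)) = eOpTab k n (by omega) (IsSYT l l.sum) μ) ∧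
      (∀ p : Fin l.sum, ρ (RingQuot.mkAlgHom k _ (Xg k p)) = 0) ∧
      (∀ (j : ℕ) (h : j + 1 < l.sum),
        ρ (RingQuot.mkAlgHom k _ (Tg k j h)) = tOpTab k (IsSYT l l.sum) j h) ∧
      -- the generators of the cyclotomic ideal act by zero, hence Sp(b) is a
      -- module over R^{Λ₁}(ξ)
      (∀ ν : Fin l.sum → Fin n,
        ν ∈ Iβ (AB n) (Pi.single ⟨0, by omega⟩ 1) (wtP n (by omega) l) l.sum →
        ∀ p : Fin l.sum, (p : ℕ) + 1 = l.sum →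
        ρ (RingQuot.mkAlgHom k _
          (Xg k p ^ ((Pi.single (⟨0, by omega⟩ : Fin n) (1 : ℤ) : Fin n → ℤ) (ν p)).toNat * Eg k ν)) = 0) ∧
      -- Sp(b) is nonzero, every x_k acts by zero (homogeneity), and there is no
      -- nontrivial invariant subspace: Sp(b) is a simple R^{Λ₁}(ξ)-module
      (∃ v : TabV k (IsSYT l l.sum), v ≠ 0) ∧
      (∀ U : Submodule k (TabV k (IsSYT l l.sum)),
        (∀ a v, v ∈ U → ρ a v ∈ U) → U = ⊥ ∨ U = ⊤) := by
  have hn0 : 0 < n := by omega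
  have hD := isShiftedIdeal_diagram hdec
  have hres (b : ℕ × ℕ) : b ∈ diagram l → resBox b ≤ n := resBox_le_of_mem_diagram hle
  rw [isSYT_eq_isLinearExtension hdec]
  refine ⟨RingQuot.liftAlgHom k ⟨tableauAction k (IsLinearExtension (diagram l)) hn0,
    fun _ _ ↦ hD.tableauAction_eq_of_rel hres hn0 hQ fun _ ↦ resSeq_mem_Iβ hn0⟩, ?_⟩
  simp only [RingQuot.liftAlgHom_mkAlgHom_apply]
  refine ⟨tableauAction_Eg hn0, tableauAction_Xg hn0, tableauAction_Tg hn0,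
    fun ν _ p hp ↦ hD.tableauAction_Xg_pow_mul_Eg hn0 hp ν, ?_, fun U hU ↦ ?_⟩
  · obtain ⟨f, hf⟩ := exists_isLinearExtension_diagram l
    exact ⟨Pi.single ⟨f, hf⟩ 1, Pi.single_ne_zero_iff.mpr one_ne_zero⟩
  · refine hD.eq_bot_or_eq_top_of_invariant hres hn0 (fun ν v hv ↦ ?_) fun j h v hv ↦ ?_
    · simpa using hU (RingQuot.mkAlgHom k _ (Eg k ν)) v hv
    · simpa using hU (RingQuot.mkAlgHom k _ (Tg k j h)) v hv

end QHA
end
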